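/- Every triangle-free induced subgraph of the triangular lattice is (7,3)-colorable: there is an assignment of 3-element subsets of {1,...,7} to the vertices such that adjacent vertices receive disjoint sets. -/

import Mathlib

def triLattice : SimpleGraph (ℤ × ℤ) :=
  SimpleGraph.fromRel (fun p q =>
    q - p ∈ ({(1, 0), (-1, 0), (0, 1), (0, -1), (-1, 1), (1, -1)} : Set (ℤ × ℤ)))

/-- The 35 three-element subsets of a seven-element set, packed as 7-bit masks. -/
def maskTable : ℕ := 49832993059746847230055807547369762320180794728785858942096215776518522247

/-- Pairwise intersection sizes (two bits per pair). -/
def interTable : ℕ := 305978791517210833629011867208874163860312524359880331789223223638984328849331727494885442662338570524287933523421909553423158398851786947441828943309702331310628597645379746808795052393419506795725101581495338897879875054399254327659308046722226512574347703227885761663940109884736826817851088720706708151575497667027977347916385794492373140696992064402542197605900255996614818576925271282166442284868673309455127082191038919412228720614271762517850909864615866688794560700098303537206624075347535560869794384620483959627698013657073631226041098853808696451784312033326251852567402670733256098697267177443021216163271717937185794663156876325755347524307133550656596137669305920088705242364147870055338754068976537522324826225377990322859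

/-- The four colors disjoint from a given color (six bits each). -/
def nbTable : ℕ := 1727311970154847807950716775361422429120520854722297049485867401612900135118537519480157927777215261389414088523722424973174919336452893487589588224803068299570883455640077130612163444825781495762343149863921686144770795561198646223703754458412545087519

/-- Seven-bit mask of a color. -/
def msk (c : Fin 35) : ℕ := (maskTable >>> (7 * c.val)) % 128

/-- Bounded universal quantifier, as a Boolean. -/
def allB (n : ℕ) (P : ℕ → Bool) : Bool := Nat.rec true (fun k b => cond (P k) b false) n

/-- Bounded existential quantifier, as a Boolean. -/
def exB (n : ℕ) (P : ℕ → Bool) : Bool := Nat.rec false (fun k b => cond (P k) true b) n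

/-- Boolean implication. -/
def bimp (a b : Bool) : Bool := cond a b true

/-- Boolean conjunction. -/
def bcon (a b : Bool) : Bool := cond a b false

/-- Boolean disjunction. -/
def bdis (a b : Bool) : Bool := cond a true b

/-- Boolean disequality. -/
def bdif (a b : ℕ) : Bool := cond (Nat.beq a b) false true

/-- Intersection size on raw indices. -/
def iszN (c d : ℕ) : ℕ :=
  Nat.mod (Nat.shiftRight interTable (Nat.mul 2 (Nat.add (Nat.mul 35 c) d))) 4

/-- Neighbor on raw indices. -/
def nbN (c i : ℕ) : ℕ :=
  Nat.mod (Nat.shiftRight nbTable (Nat.mul 6 (Nat.add (Nat.mul 4 c) i))) 64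

/-- Size of the intersection of the two triples. -/
def isz (c d : Fin 35) : ℕ := iszN c.1 d.1

/-- The `i`-th color disjoint from `c`. -/
def nb (c : Fin 35) (i : Fin 4) : Fin 35 := ⟨nbN c.1 i.1 % 35, Nat.mod_lt _ (by decide)⟩

lemma allB_iff (n : ℕ) (P : ℕ → Bool) : allB n P = true ↔ ∀ k : Fin n, P k.1 = true := by
  induction n with
  | zero => simp [allB]
  | succ n ih =>
    have : allB (n + 1) P = cond (P n) (allB n P) false := rfl
    rw [this, Fin.forall_fin_succ']
    cases h : P n <;> simp [h, ih]

lemma exB_iff (n : ℕ) (P : ℕ → Bool) : exB n P = true ↔ ∃ k : Fin n, P k.1 = true := by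
  induction n with
  | zero => simp [exB]
  | succ n ih =>
    have : exB (n + 1) P = cond (P n) true (exB n P) := rfl
    rw [this, Fin.exists_fin_succ']
    cases h : P n <;> simp [h, ih]

lemma bimp_iff (a b : Bool) : bimp a b = true ↔ (a = true → b = true) := by
  cases a <;> cases b <;> decide
lemma bcon_iff (a b : Bool) : bcon a b = true ↔ (a = true ∧ b = true) := by
  cases a <;> cases b <;> decide
lemma bdis_iff (a b : Bool) : bdis a b = true ↔ (a = true ∨ b = true) := by
  cases a <;> cases b <;> decide
lemma ble_iff (a b : ℕ) : Nat.ble a b = true ↔ a ≤ b := by simp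
lemma beq_iff (a b : ℕ) : Nat.beq a b = true ↔ a = b := by simp
lemma bdif_iff (a b : ℕ) : bdif a b = true ↔ a ≠ b := by
  unfold bdif
  cases h : Nat.beq a b
  · have : ¬ Nat.beq a b = true := by simp [h]
    rw [beq_iff] at this
    simpa using this
  · rw [beq_iff] at h
    simpa using h
lemma isz_val (c d : Fin 35) : iszN c.1 d.1 = isz c d := rfl
lemma nbN_lt : ∀ (c : Fin 35) (i : Fin 4), nbN c.1 i.1 < 35 := by decide +kernel
lemma nb_val (c : Fin 35) (i : Fin 4) : nbN c.1 i.1 = (nb c i).1 :=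
  (Nat.mod_eq_of_lt (nbN_lt c i)).symm


lemma isz_nb : ∀ (p : Fin 35) (i : Fin 4), isz p (nb p i) = 0 := by
  have h : (
      allB 35 fun p => (allB 4 fun i => (Nat.beq (iszN p (nbN p i)) 0))) = true := by
    decide +kernel
  simpa only [allB_iff, exB_iff, bimp_iff, bcon_iff, bdis_iff, ble_iff, beq_iff, bdif_iff,
    nb_val, isz_val, Fin.val_inj, ne_eq] using h
lemma exists_nb : ∀ (p c : Fin 35), isz p c = 0 → ∃ i, c = nb p i := by
  have h : (
      allB 35 fun p => (allB 35 fun c => (bimp (Nat.beq (iszN p c) 0) (exB 4 fun i => (Nat.beq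
      c (nbN p i)))))) = true := by
    decide +kernel
  simpa only [allB_iff, exB_iff, bimp_iff, bcon_iff, bdis_iff, ble_iff, beq_iff, bdif_iff,
    nb_val, isz_val, Fin.val_inj, ne_eq] using h
lemma nb_inj : ∀ (p : Fin 35) (i j : Fin 4), i ≠ j → nb p i ≠ nb p j := by
  have h : (
      allB 35 fun p => (allB 4 fun i => (allB 4 fun j => (bimp (bdif i j) (bdif (nbN p i) (nbN
      p j)))))) = true := by
    decide +kernel
  simpa only [allB_iff, exB_iff, bimp_iff, bcon_iff, bdis_iff, ble_iff, beq_iff, bdif_iff,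
    nb_val, isz_val, Fin.val_inj, ne_eq] using h
lemma isz_comm : ∀ c d : Fin 35, isz c d = isz d c := by
  have h : (
      allB 35 fun c => (allB 35 fun d => (Nat.beq (iszN c d) (iszN d c)))) = true := by
    decide +kernel
  simpa only [allB_iff, exB_iff, bimp_iff, bcon_iff, bdis_iff, ble_iff, beq_iff, bdif_iff,
    nb_val, isz_val, Fin.val_inj, ne_eq] using h
lemma isz_self : ∀ c : Fin 35, isz c c = 3 := by
  have h : (
      allB 35 fun c => (Nat.beq (iszN c c) 3)) = true := by
    decide +kernel
  simpa only [allB_iff, exB_iff, bimp_iff, bcon_iff, bdis_iff, ble_iff, beq_iff, bdif_iff,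
    nb_val, isz_val, Fin.val_inj, ne_eq] using h
lemma isz_le : ∀ c d : Fin 35, isz c d ≤ 3 := by decide +kernel
lemma eq_of_isz : ∀ c d : Fin 35, isz c d = 3 → c = d := by
  have h : (
      allB 35 fun c => (allB 35 fun d => (bimp (Nat.beq (iszN c d) 3) (Nat.beq c d)))) = true := by
    decide +kernel
  simpa only [allB_iff, exB_iff, bimp_iff, bcon_iff, bdis_iff, ble_iff, beq_iff, bdif_iff,
    nb_val, isz_val, Fin.val_inj, ne_eq] using h

/-! facts along a run -/
lemma run2 : ∀ p c : Fin 35, 2 ≤ isz p c → ∃ i, isz (nb p i) c = 0 := by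
  have h : (
      allB 35 fun p => (allB 35 fun c => (bimp (Nat.ble 2 (iszN p c)) (exB 4 fun i => (Nat.beq
      (iszN (nbN p i) c) 0))))) = true := by
    decide +kernel
  simpa only [allB_iff, exB_iff, bimp_iff, bcon_iff, bdis_iff, ble_iff, beq_iff, bdif_iff,
    nb_val, isz_val, Fin.val_inj, ne_eq] using h
lemma run3 : ∀ p c : Fin 35, isz p c ≤ 1 → ∃ u, 2 ≤ isz p u ∧ isz u c = 0 := by
  have h : (
      allB 35 fun p => (allB 35 fun c => (bimp (Nat.ble (iszN p c) 1) (exB 35 fun u => (bcon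
      (Nat.ble 2 (iszN p u)) (Nat.beq (iszN u c) 0)))))) = true := by
    decide +kernel
  simpa only [allB_iff, exB_iff, bimp_iff, bcon_iff, bdis_iff, ble_iff, beq_iff, bdif_iff,
    nb_val, isz_val, Fin.val_inj, ne_eq] using h
lemma run4 : ∀ p c : Fin 35, 1 ≤ isz p c → ∃ u, isz p u ≤ 1 ∧ isz u c = 0 := by
  have h : (
      allB 35 fun p => (allB 35 fun c => (bimp (Nat.ble 1 (iszN p c)) (exB 35 fun u => (bcon
      (Nat.ble (iszN p u) 1) (Nat.beq (iszN u c) 0)))))) = true := by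
    decide +kernel
  simpa only [allB_iff, exB_iff, bimp_iff, bcon_iff, bdis_iff, ble_iff, beq_iff, bdif_iff,
    nb_val, isz_val, Fin.val_inj, ne_eq] using h
lemma run5 : ∀ p c : Fin 35, p ≠ c → ∃ u, 1 ≤ isz p u ∧ isz u c = 0 := by
  have h : (
      allB 35 fun p => (allB 35 fun c => (bimp (bdif p c) (exB 35 fun u => (bcon (Nat.ble 1
      (iszN p u)) (Nat.beq (iszN u c) 0)))))) = true := by
    decide +kernel
  simpa only [allB_iff, exB_iff, bimp_iff, bcon_iff, bdis_iff, ble_iff, beq_iff, bdif_iff,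
    nb_val, isz_val, Fin.val_inj, ne_eq] using h
lemma runV : ∀ e c : Fin 35, isz e c = 1 → ∃ u, isz e u = 1 ∧ isz u c = 0 := by
  have h : (
      allB 35 fun e => (allB 35 fun c => (bimp (Nat.beq (iszN e c) 1) (exB 35 fun u => (bcon
      (Nat.beq (iszN e u) 1) (Nat.beq (iszN u c) 0)))))) = true := by
    decide +kernel
  simpa only [allB_iff, exB_iff, bimp_iff, bcon_iff, bdis_iff, ble_iff, beq_iff, bdif_iff,
    nb_val, isz_val, Fin.val_inj, ne_eq] using h
lemma runVR : ∀ e p : Fin 35, e ≠ p → ∃ i j, i ≠ j ∧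
    (∃ u, isz e u = 1 ∧ isz u (nb p i) = 0) ∧ ∃ u, isz e u = 1 ∧ isz u (nb p j) = 0 := by
  have h : (
      allB 35 fun e => (allB 35 fun p => (bimp (bdif e p) (exB 4 fun i => (exB 4 fun j => (bcon
      (bdif i j) (bcon (exB 35 fun u => (bcon (Nat.beq (iszN e u) 1) (Nat.beq (iszN u (nbN p
      i)) 0))) (exB 35 fun u => (bcon (Nat.beq (iszN e u) 1) (Nat.beq (iszN u (nbN p j))
      0)))))))))) = true := by
    decide +kernel
  simpa only [allB_iff, exB_iff, bimp_iff, bcon_iff, bdis_iff, ble_iff, beq_iff, bdif_iff,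
    nb_val, isz_val, Fin.val_inj, ne_eq] using h
lemma avoidV : ∀ s q : Fin 35, ∃ e, e ≠ q ∧ isz e s ≠ 1 := by
  have h : (
      allB 35 fun s => (allB 35 fun q => (exB 35 fun e => (bcon (bdif e q) (bdif (iszN e s)
      1))))) = true := by
    decide +kernel
  simpa only [allB_iff, exB_iff, bimp_iff, bcon_iff, bdis_iff, ble_iff, beq_iff, bdif_iff,
    nb_val, isz_val, Fin.val_inj, ne_eq] using h
lemma avoidR : ∀ s p : Fin 35, ∃ i j, i ≠ j ∧ nb p i ≠ s ∧ nb p j ≠ s := by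
  have h : (
      allB 35 fun s => (allB 35 fun p => (exB 4 fun i => (exB 4 fun j => (bcon (bdif i j) (bcon
      (bdif (nbN p i) s) (bdif (nbN p j) s))))))) = true := by
    decide +kernel
  simpa only [allB_iff, exB_iff, bimp_iff, bcon_iff, bdis_iff, ble_iff, beq_iff, bdif_iff,
    nb_val, isz_val, Fin.val_inj, ne_eq] using h
lemma end2 : ∀ s p : Fin 35, isz s p ≤ 1 → ∃ i j, i ≠ j ∧
    2 ≤ isz s (nb p i) ∧ 2 ≤ isz s (nb p j) := by
  have h : (
      allB 35 fun s => (allB 35 fun p => (bimp (Nat.ble (iszN s p) 1) (exB 4 fun i => (exB 4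
      fun j => (bcon (bdif i j) (bcon (Nat.ble 2 (iszN s (nbN p i))) (Nat.ble 2 (iszN s (nbN p
      j)))))))))) = true := by
    decide +kernel
  simpa only [allB_iff, exB_iff, bimp_iff, bcon_iff, bdis_iff, ble_iff, beq_iff, bdif_iff,
    nb_val, isz_val, Fin.val_inj, ne_eq] using h
lemma end3 : ∀ s p : Fin 35, 1 ≤ isz s p → isz s p ≤ 2 → ∃ i j, i ≠ j ∧
    isz s (nb p i) ≤ 1 ∧ isz s (nb p j) ≤ 1 := by
  have h : (
      allB 35 fun s => (allB 35 fun p => (bimp (Nat.ble 1 (iszN s p)) (bimp (Nat.ble (iszN s p)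
      2) (exB 4 fun i => (exB 4 fun j => (bcon (bdif i j) (bcon (Nat.ble (iszN s (nbN p i)) 1)
      (Nat.ble (iszN s (nbN p j)) 1))))))))) = true := by
    decide +kernel
  simpa only [allB_iff, exB_iff, bimp_iff, bcon_iff, bdis_iff, ble_iff, beq_iff, bdif_iff,
    nb_val, isz_val, Fin.val_inj, ne_eq] using h
lemma end4 : ∀ s p : Fin 35, isz s p ≠ 3 → ∃ i j, i ≠ j ∧
    1 ≤ isz s (nb p i) ∧ 1 ≤ isz s (nb p j) := by
  have h : (
      allB 35 fun s => (allB 35 fun p => (bimp (bdif (iszN s p) 3) (exB 4 fun i => (exB 4 fun j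
      => (bcon (bdif i j) (bcon (Nat.ble 1 (iszN s (nbN p i))) (Nat.ble 1 (iszN s (nbN p
      j)))))))))) = true := by
    decide +kernel
  simpa only [allB_iff, exB_iff, bimp_iff, bcon_iff, bdis_iff, ble_iff, beq_iff, bdif_iff,
    nb_val, isz_val, Fin.val_inj, ne_eq] using h

/-! compositions -/
lemma comp11 : ∀ e c : Fin 35, ∃ u, isz e u = 1 ∧ isz u c = 1 := by
  have h : (
      allB 35 fun e => (allB 35 fun c => (exB 35 fun u => (bcon (Nat.beq (iszN e u) 1) (Nat.beq
      (iszN u c) 1))))) = true := by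
    decide +kernel
  simpa only [allB_iff, exB_iff, bimp_iff, bcon_iff, bdis_iff, ble_iff, beq_iff, bdif_iff,
    nb_val, isz_val, Fin.val_inj, ne_eq] using h
lemma two_one : ∀ e : Fin 35, ∃ u v, u ≠ v ∧ isz e u = 1 ∧ isz e v = 1 := by
  have h : (
      allB 35 fun e => (exB 35 fun u => (exB 35 fun v => (bcon (bdif u v) (bcon (Nat.beq (iszN
      e u) 1) (Nat.beq (iszN e v) 1)))))) = true := by
    decide +kernel
  simpa only [allB_iff, exB_iff, bimp_iff, bcon_iff, bdis_iff, ble_iff, beq_iff, bdif_iff,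
    nb_val, isz_val, Fin.val_inj, ne_eq] using h
lemma two_ball : ∀ e : Fin 35, ∃ u v, u ≠ v ∧ 2 ≤ isz e u ∧ 2 ≤ isz e v := by
  have h : (
      allB 35 fun e => (exB 35 fun u => (exB 35 fun v => (bcon (bdif u v) (bcon (Nat.ble 2
      (iszN e u)) (Nat.ble 2 (iszN e v))))))) = true := by
    decide +kernel
  simpa only [allB_iff, exB_iff, bimp_iff, bcon_iff, bdis_iff, ble_iff, beq_iff, bdif_iff,
    nb_val, isz_val, Fin.val_inj, ne_eq] using h
lemma ball2 : ∀ s c : Fin 35, s ≠ c → ∃ u, 2 ≤ isz s u ∧ isz u c ≤ 1 := by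
  have h : (
      allB 35 fun s => (allB 35 fun c => (bimp (bdif s c) (exB 35 fun u => (bcon (Nat.ble 2
      (iszN s u)) (Nat.ble (iszN u c) 1)))))) = true := by
    decide +kernel
  simpa only [allB_iff, exB_iff, bimp_iff, bcon_iff, bdis_iff, ble_iff, beq_iff, bdif_iff,
    nb_val, isz_val, Fin.val_inj, ne_eq] using h
lemma ball3 : ∀ s c : Fin 35, ∃ u, 2 ≤ isz s u ∧ 1 ≤ isz u c ∧ isz u c ≤ 2 := by
  have h : (
      allB 35 fun s => (allB 35 fun c => (exB 35 fun u => (bcon (Nat.ble 2 (iszN s u)) (bcon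
      (Nat.ble 1 (iszN u c)) (Nat.ble (iszN u c) 2)))))) = true := by
    decide +kernel
  simpa only [allB_iff, exB_iff, bimp_iff, bcon_iff, bdis_iff, ble_iff, beq_iff, bdif_iff,
    nb_val, isz_val, Fin.val_inj, ne_eq] using h
lemma comp_aux : ∀ (r q : Fin 35) (i : Fin 4), isz r q ≤ 1 → 1 ≤ isz (nb r i) q := by
  have h : (
      allB 35 fun r => (allB 35 fun q => (allB 4 fun i => (bimp (Nat.ble (iszN r q) 1) (Nat.ble
      1 (iszN (nbN r i) q)))))) = true := by
    decide +kernel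
  simpa only [allB_iff, exB_iff, bimp_iff, bcon_iff, bdis_iff, ble_iff, beq_iff, bdif_iff,
    nb_val, isz_val, Fin.val_inj, ne_eq] using h
lemma comp01 (p r q : Fin 35) (h : isz p r = 0) (hle : isz r q ≤ 1) : 1 ≤ isz p q := by
  rw [isz_comm] at h
  obtain ⟨i, rfl⟩ := exists_nb r p h
  exact comp_aux r q i hle
/-! transitions out of a right-hooked end -/
lemma trRA2 : ∀ p q : Fin 35, isz p q = 0 → ∀ i k, isz (nb p i) (nb q k) ≤ 1 := by
  have h : (
      allB 35 fun p => (allB 35 fun q => (bimp (Nat.beq (iszN p q) 0) (allB 4 fun i => (allB 4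
      fun k => (Nat.ble (iszN (nbN p i) (nbN q k)) 1)))))) = true := by
    decide +kernel
  simpa only [allB_iff, exB_iff, bimp_iff, bcon_iff, bdis_iff, ble_iff, beq_iff, bdif_iff,
    nb_val, isz_val, Fin.val_inj, ne_eq] using h
lemma trRA2f : ∀ p q : Fin 35, isz p q = 0 → ∀ i j, i ≠ j → ∃ m, ∀ k, k ≠ m →
    isz (nb p i) (nb q k) = 1 ∨ isz (nb p j) (nb q k) = 1 := by
  have h : (
      allB 35 fun p => (allB 35 fun q => (bimp (Nat.beq (iszN p q) 0) (allB 4 fun i => (allB 4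
      fun j => (bimp (bdif i j) (exB 4 fun m => (allB 4 fun k => (bimp (bdif k m) (bdis
      (Nat.beq (iszN (nbN p i) (nbN q k)) 1) (Nat.beq (iszN (nbN p j) (nbN q k)) 1))))))))))) = true := by
    decide +kernel
  simpa only [allB_iff, exB_iff, bimp_iff, bcon_iff, bdis_iff, ble_iff, beq_iff, bdif_iff,
    nb_val, isz_val, Fin.val_inj, ne_eq] using h
lemma trRV2 : ∀ p q : Fin 35, isz p q ≤ 1 → ∀ i j, i ≠ j → ∃ k l, k ≠ l ∧
    (isz (nb p i) (nb q k) = 1 ∨ isz (nb p j) (nb q k) = 1) ∧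
    (isz (nb p i) (nb q l) = 1 ∨ isz (nb p j) (nb q l) = 1) := by
  have h : (
      allB 35 fun p => (allB 35 fun q => (bimp (Nat.ble (iszN p q) 1) (allB 4 fun i => (allB 4
      fun j => (bimp (bdif i j) (exB 4 fun k => (exB 4 fun l => (bcon (bdif k l) (bcon (bdis
      (Nat.beq (iszN (nbN p i) (nbN q k)) 1) (Nat.beq (iszN (nbN p j) (nbN q k)) 1)) (bdis
      (Nat.beq (iszN (nbN p i) (nbN q l)) 1) (Nat.beq (iszN (nbN p j) (nbN q l)) 1)))))))))))) = true := by
    decide +kernel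
  simpa only [allB_iff, exB_iff, bimp_iff, bcon_iff, bdis_iff, ble_iff, beq_iff, bdif_iff,
    nb_val, isz_val, Fin.val_inj, ne_eq] using h
lemma trRA3 : ∀ p q : Fin 35, 1 ≤ isz p q → ∀ i j, i ≠ j → ∀ k,
    (1 ≤ isz (nb p i) (nb q k) ∧ isz (nb p i) (nb q k) ≤ 2) ∨
    (1 ≤ isz (nb p j) (nb q k) ∧ isz (nb p j) (nb q k) ≤ 2) := by
  have h : (
      allB 35 fun p => (allB 35 fun q => (bimp (Nat.ble 1 (iszN p q)) (allB 4 fun i => (allB 4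
      fun j => (bimp (bdif i j) (allB 4 fun k => (bdis (bcon (Nat.ble 1 (iszN (nbN p i) (nbN q
      k))) (Nat.ble (iszN (nbN p i) (nbN q k)) 2)) (bcon (Nat.ble 1 (iszN (nbN p j) (nbN q k)))
      (Nat.ble (iszN (nbN p j) (nbN q k)) 2)))))))))) = true := by
    decide +kernel
  simpa only [allB_iff, exB_iff, bimp_iff, bcon_iff, bdis_iff, ble_iff, beq_iff, bdif_iff,
    nb_val, isz_val, Fin.val_inj, ne_eq] using h
/-! transitions out of a left-hooked end -/
lemma trLA2 : ∀ p q : Fin 35, isz p q ≤ 1 → ∀ m k, ∃ i, i ≠ m ∧ isz (nb p i) (nb q k) ≤ 1 := by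
  have h : (
      allB 35 fun p => (allB 35 fun q => (bimp (Nat.ble (iszN p q) 1) (allB 4 fun m => (allB 4
      fun k => (exB 4 fun i => (bcon (bdif i m) (Nat.ble (iszN (nbN p i) (nbN q k)) 1)))))))) = true := by
    decide +kernel
  simpa only [allB_iff, exB_iff, bimp_iff, bcon_iff, bdis_iff, ble_iff, beq_iff, bdif_iff,
    nb_val, isz_val, Fin.val_inj, ne_eq] using h
lemma trLA2f : ∀ p q : Fin 35, isz p q ≤ 1 → ∀ m, ∃ n, ∀ k, k ≠ n →
    ∃ i, i ≠ m ∧ isz (nb p i) (nb q k) = 1 := by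
  have h : (
      allB 35 fun p => (allB 35 fun q => (bimp (Nat.ble (iszN p q) 1) (allB 4 fun m => (exB 4
      fun n => (allB 4 fun k => (bimp (bdif k n) (exB 4 fun i => (bcon (bdif i m) (Nat.beq
      (iszN (nbN p i) (nbN q k)) 1)))))))))) = true := by
    decide +kernel
  simpa only [allB_iff, exB_iff, bimp_iff, bcon_iff, bdis_iff, ble_iff, beq_iff, bdif_iff,
    nb_val, isz_val, Fin.val_inj, ne_eq] using h
lemma trLV2 : ∀ p q : Fin 35, 1 ≤ isz p q → isz p q ≤ 2 → ∀ m, ∃ k l, k ≠ l ∧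
    (∃ i, i ≠ m ∧ isz (nb p i) (nb q k) = 1) ∧ ∃ i, i ≠ m ∧ isz (nb p i) (nb q l) = 1 := by
  have h : (
      allB 35 fun p => (allB 35 fun q => (bimp (Nat.ble 1 (iszN p q)) (bimp (Nat.ble (iszN p q)
      2) (allB 4 fun m => (exB 4 fun k => (exB 4 fun l => (bcon (bdif k l) (bcon (exB 4 fun i
      => (bcon (bdif i m) (Nat.beq (iszN (nbN p i) (nbN q k)) 1))) (exB 4 fun i => (bcon (bdif
      i m) (Nat.beq (iszN (nbN p i) (nbN q l)) 1)))))))))))) = true := by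
    decide +kernel
  simpa only [allB_iff, exB_iff, bimp_iff, bcon_iff, bdis_iff, ble_iff, beq_iff, bdif_iff,
    nb_val, isz_val, Fin.val_inj, ne_eq] using h
lemma trLA3 : ∀ p q : Fin 35, 1 ≤ isz p q → ∀ m k, ∃ i, i ≠ m ∧
    1 ≤ isz (nb p i) (nb q k) ∧ isz (nb p i) (nb q k) ≤ 2 := by
  have h : (
      allB 35 fun p => (allB 35 fun q => (bimp (Nat.ble 1 (iszN p q)) (allB 4 fun m => (allB 4
      fun k => (exB 4 fun i => (bcon (bdif i m) (bcon (Nat.ble 1 (iszN (nbN p i) (nbN q k)))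
      (Nat.ble (iszN (nbN p i) (nbN q k)) 2))))))))) = true := by
    decide +kernel
  simpa only [allB_iff, exB_iff, bimp_iff, bcon_iff, bdis_iff, ble_iff, beq_iff, bdif_iff,
    nb_val, isz_val, Fin.val_inj, ne_eq] using h
lemma trLV3 : ∀ p q : Fin 35, ∀ m, ∃ k l, k ≠ l ∧
    (∃ i, i ≠ m ∧ 1 ≤ isz (nb p i) (nb q k) ∧ isz (nb p i) (nb q k) ≤ 2) ∧
    ∃ i, i ≠ m ∧ 1 ≤ isz (nb p i) (nb q l) ∧ isz (nb p i) (nb q l) ≤ 2 := by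
  have h : (
      allB 35 fun p => (allB 35 fun q => (allB 4 fun m => (exB 4 fun k => (exB 4 fun l => (bcon
      (bdif k l) (bcon (exB 4 fun i => (bcon (bdif i m) (bcon (Nat.ble 1 (iszN (nbN p i) (nbN q
      k))) (Nat.ble (iszN (nbN p i) (nbN q k)) 2)))) (exB 4 fun i => (bcon (bdif i m) (bcon
      (Nat.ble 1 (iszN (nbN p i) (nbN q l))) (Nat.ble (iszN (nbN p i) (nbN q l)) 2))))))))))) = true := by
    decide +kernel
  simpa only [allB_iff, exB_iff, bimp_iff, bcon_iff, bdis_iff, ble_iff, beq_iff, bdif_iff,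
    nb_val, isz_val, Fin.val_inj, ne_eq] using h

/-! The row invariant -/

/-- The invariant on the coloring `f` of a row `r`, with `r'` the row above; only pairs whose
right end satisfies `N` are constrained. -/
structure RowOK (r r' : ℤ → Prop) (f : ℤ → Fin 35) (N : ℤ → Prop) : Prop where
  adj : ∀ z w, z + 1 = w → N w → r z → r w → isz (f z) (f w) = 0
  g1 : ∀ z y w, z + 1 = y → z + 2 = w → N w → r z → ¬ r y → r w → isz (f z) (f w) ≤ 1
  g1f : ∀ t z y w, t + 1 = z → z + 1 = y → z + 2 = w → N w → r z → ¬ r y → r w → r' t → r' w →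
    1 ≤ isz (f z) (f w)
  g2 : ∀ z y y' w, z + 1 = y → z + 2 = y' → z + 3 = w → N w → r z → ¬ r y → ¬ r y' → r w →
    1 ≤ isz (f z) (f w) ∧ isz (f z) (f w) ≤ 2
  g3 : ∀ z y y' y'' w, z + 1 = y → z + 2 = y' → z + 3 = y'' → z + 4 = w → N w → r z →
    ¬ r y → ¬ r y' → ¬ r y'' → r w → isz (f z) (f w) ≠ 3

/-- Partial coloring `g` of the row `r1` above the colored row `r0`, correct for columns up to
`X`. -/
structure PG (r0 r1 r2 : ℤ → Prop) (f g : ℤ → Fin 35) (X : ℤ) : Prop where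
  row : RowOK r1 r2 g (fun w => w ≤ X)
  hL : ∀ z, z ≤ X → r1 z → r0 z → isz (f z) (g z) = 0
  hR : ∀ z w, z + 1 = w → w ≤ X → r1 z → r0 w → isz (f w) (g z) = 0

/-- Colors that may follow color `u` of column `b` in column `a`, nothing in between. -/
structure Al (r2 : ℤ → Prop) (b a : ℤ) (u c : Fin 35) : Prop where
  d2 : a = b + 2 → isz u c ≤ 1
  d2f : a = b + 2 → r2 (b - 1) → r2 a → 1 ≤ isz u c
  d3 : a = b + 3 → 1 ≤ isz u c ∧ isz u c ≤ 2
  d4 : a = b + 4 → isz u c ≠ 3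

lemma pg_first {r0 r1 r2 : ℤ → Prop} {f : ℤ → Fin 35} {a : ℤ} (c : Fin 35)
    (hno : ∀ z, z < a → ¬ r1 z) (hc : r0 a → isz (f a) c = 0) :
    PG r0 r1 r2 f (fun _ => c) a := by
  refine ⟨⟨?_, ?_, ?_, ?_, ?_⟩, ?_, ?_⟩
  · intro z w h1 hw hz; exact absurd hz (hno z (by omega))
  · intro z y w h1 h2 hw hz; exact absurd hz (hno z (by omega))
  · intro t z y w h1 h2 h3 hw hz; exact absurd hz (hno z (by omega))
  · intro z y y' w h1 h2 h3 hw hz; exact absurd hz (hno z (by omega))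
  · intro z y y' y'' w h1 h2 h3 h4 hw hz; exact absurd hz (hno z (by omega))
  · intro z hz h1 h0
    rcases lt_or_eq_of_le hz with h | rfl
    · exact absurd h1 (hno z h)
    · exact hc h0
  · intro z w h1 hw hz; exact absurd hz (hno z (by omega))

lemma pg_run {r0 r1 r2 : ℤ → Prop} {f g : ℤ → Fin 35} {x y : ℤ} (c : Fin 35) (hy : x + 1 = y)
    (hg : PG r0 r1 r2 f g x) (hx : r1 x) (h0 : ¬ r0 y) (hc : isz (g x) c = 0) :
    PG r0 r1 r2 f (fun z => if z ≤ x then g z else c) y := by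
  refine ⟨⟨?_, ?_, ?_, ?_, ?_⟩, ?_, ?_⟩
  · intro z w h1 hw hz hw1
    by_cases hwx : w ≤ x
    · simpa [hwx, show z ≤ x by omega] using hg.row.adj z w h1 hwx hz hw1
    · obtain rfl : z = x := by omega
      simpa [hwx] using hc
  · intro z v w h1 h2 hw hz hv hw1
    by_cases hwx : w ≤ x
    · simpa [hwx, show z ≤ x by omega] using hg.row.g1 z v w h1 h2 hwx hz hv hw1
    · obtain rfl : v = x := by omega
      exact absurd hx hv
  · intro t z v w h0 h1 h2 hw hz hv hw1
    by_cases hwx : w ≤ x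
    · simpa [hwx, show z ≤ x by omega] using hg.row.g1f t z v w h0 h1 h2 hwx hz hv hw1
    · obtain rfl : v = x := by omega
      exact absurd hx hv
  · intro z v v' w h1 h2 h3 hw hz hv hv' hw1
    by_cases hwx : w ≤ x
    · simpa [hwx, show z ≤ x by omega] using hg.row.g2 z v v' w h1 h2 h3 hwx hz hv hv' hw1
    · obtain rfl : v' = x := by omega
      exact absurd hx hv'
  · intro z v v' v'' w h1 h2 h3 h4 hw hz hv hv' hv'' hw1
    by_cases hwx : w ≤ x
    · simpa [hwx, show z ≤ x by omega] using
        hg.row.g3 z v v' v'' w h1 h2 h3 h4 hwx hz hv hv' hv'' hw1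
    · obtain rfl : v'' = x := by omega
      exact absurd hx hv''
  · intro z hz h1 h2
    by_cases hzx : z ≤ x
    · simpa [hzx] using hg.hL z hzx h1 h2
    · obtain rfl : z = y := by omega
      exact absurd h2 h0
  · intro z w h1 hw hz hw0
    by_cases hwx : w ≤ x
    · simpa [show z ≤ x by omega] using hg.hR z w h1 hwx hz hw0
    · obtain rfl : w = y := by omega
      exact absurd hw0 h0

lemma pg_end {r0 r1 r2 : ℤ → Prop} {f g : ℤ → Fin 35} {x y : ℤ} (hy : x + 1 = y)
    (hg : PG r0 r1 r2 f g x) (h1y : ¬ r1 y) (hc : r0 y → isz (f y) (g x) = 0) :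
    PG r0 r1 r2 f g y := by
  have key : ∀ w, w ≤ y → r1 w → w ≤ x := by
    intro w hw h
    by_contra hcon
    obtain rfl : w = y := by omega
    exact h1y h
  refine ⟨⟨?_, ?_, ?_, ?_, ?_⟩, ?_, ?_⟩
  · intro z w h1 hw hz hw1
    exact hg.row.adj z w h1 (key w hw hw1) hz hw1
  · intro z v w h1 h2 hw hz hv hw1
    exact hg.row.g1 z v w h1 h2 (key w hw hw1) hz hv hw1
  · intro t z v w h0 h1 h2 hw hz hv hw1
    exact hg.row.g1f t z v w h0 h1 h2 (key w hw hw1) hz hv hw1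
  · intro z v v' w h1 h2 h3 hw hz hv hv' hw1
    exact hg.row.g2 z v v' w h1 h2 h3 (key w hw hw1) hz hv hv' hw1
  · intro z v v' v'' w h1 h2 h3 h4 hw hz hv hv' hv'' hw1
    exact hg.row.g3 z v v' v'' w h1 h2 h3 h4 (key w hw hw1) hz hv hv' hv'' hw1
  · intro z hz h1 h2
    exact hg.hL z (key z hz h1) h1 h2
  · intro z w h1 hw hz hw0
    by_cases hwx : w ≤ x
    · exact hg.hR z w h1 hwx hz hw0
    · obtain rfl : w = y := by omega
      obtain rfl : z = x := by omega
      exact hc hw0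

lemma pg_jump {r0 r1 r2 : ℤ → Prop} {f g : ℤ → Fin 35} {b a : ℤ} (c : Fin 35) (hab : b + 1 < a)
    (hg : PG r0 r1 r2 f g (b + 1)) (hb : r1 b) (ha : r1 a) (hno : ∀ z, b < z → z < a → ¬ r1 z)
    (h0 : r0 a → isz (f a) c = 0) (hc : Al r2 b a (g b) c) :
    PG r0 r1 r2 f (fun z => if z < a then g z else c) a := by
  have key : ∀ w, w ≤ a → r1 w → w ≤ b ∨ w = a := by
    intro w hw h
    by_contra hcon
    exact hno w (by omega) (by omega) h
  have key2 : ∀ z, r1 z → z < a → z ≤ b := by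
    intro z hz h
    rcases key z (by omega) hz with h | h <;> omega
  refine ⟨⟨?_, ?_, ?_, ?_, ?_⟩, ?_, ?_⟩
  · intro z w h1 hw hz hw1
    rcases key w hw hw1 with h | rfl
    · simpa [show z < a by omega, show w < a by omega] using
        hg.row.adj z w h1 (by omega) hz hw1
    · have := key2 z hz (by omega)
      omega
  · intro z v w h1 h2 hw hz hv hw1
    rcases key w hw hw1 with h | rfl
    · simpa [show z < a by omega, show w < a by omega] using
        hg.row.g1 z v w h1 h2 (by omega) hz hv hw1
    · have := key2 z hz (by omega)
      obtain rfl : z = b := by omega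
      simpa [show z < w by omega] using hc.d2 (by omega)
  · intro t z v w h0 h1 h2 hw hz hv hw1 ht hw2
    rcases key w hw hw1 with h | rfl
    · simpa [show z < a by omega, show w < a by omega] using
        hg.row.g1f t z v w h0 h1 h2 (by omega) hz hv hw1 ht hw2
    · have := key2 z hz (by omega)
      obtain rfl : z = b := by omega
      obtain rfl : t = z - 1 := by omega
      simpa [show z < w by omega] using hc.d2f (by omega) ht hw2
  · intro z v v' w h1 h2 h3 hw hz hv hv' hw1
    rcases key w hw hw1 with h | rfl
    · simpa [show z < a by omega, show w < a by omega] using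
        hg.row.g2 z v v' w h1 h2 h3 (by omega) hz hv hv' hw1
    · have := key2 z hz (by omega)
      have hzb : z = b := by
        by_contra hcon
        rcases (by omega : v = b ∨ v' = b) with rfl | rfl
        · exact hv hb
        · exact hv' hb
      subst hzb
      simpa [show z < w by omega] using hc.d3 (by omega)
  · intro z v v' v'' w h1 h2 h3 h4 hw hz hv hv' hv'' hw1
    rcases key w hw hw1 with h | rfl
    · simpa [show z < a by omega, show w < a by omega] using
        hg.row.g3 z v v' v'' w h1 h2 h3 h4 (by omega) hz hv hv' hv'' hw1
    · have := key2 z hz (by omega)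
      have hzb : z = b := by
        by_contra hcon
        rcases (by omega : v = b ∨ v' = b ∨ v'' = b) with rfl | rfl | rfl
        · exact hv hb
        · exact hv' hb
        · exact hv'' hb
      subst hzb
      simpa [show z < w by omega] using hc.d4 (by omega)
  · intro z hz h1 h2
    rcases key z hz h1 with h | rfl
    · simpa [show z < a by omega] using hg.hL z (by omega) h1 h2
    · simpa using h0 h2
  · intro z w h1 hw hz hw0
    have := key2 z hz (by omega)
    simpa [show z < a by omega] using hg.hR z w h1 (by omega) hz hw0

section Rows

/-! Sets of reachable colors -/

/-- What is known about the set `S` of colors reachable at column `x` of the new row. -/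
inductive Run (r0 r1 r2 : ℤ → Prop) (f : ℤ → Fin 35) (S : Fin 35 → Prop) (x : ℤ) : Prop
  | A (m : Fin 4) (h0 : r0 x) (h : ∀ i, i ≠ m → S (nb (f x) i))
      (h' : ¬ r2 x → ∀ i, S (nb (f x) i))
  | A2 (h1 : r1 (x - 1)) (h0 : r0 (x - 1)) (n0 : ¬ r0 x)
      (h : ∀ c, 2 ≤ isz (f (x - 1)) c → S c)
  | A3 (h0 : r0 (x - 2)) (n1 : ¬ r0 (x - 1)) (n0 : ¬ r0 x)
      (h : ∀ c, isz (f (x - 2)) c ≤ 1 → S c)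
  | A4 (h0 : r0 (x - 3)) (n2 : ¬ r0 (x - 2)) (n1 : ¬ r0 (x - 1)) (n0 : ¬ r0 x)
      (h : ∀ c, 1 ≤ isz (f (x - 3)) c → S c)
  | V (n0 : ¬ r0 x) (h : ∀ q, ∃ e, e ≠ q ∧ ∀ c, isz e c = 1 → S c)
      (h' : r0 (x + 1) → ∃ i j, i ≠ j ∧ S (nb (f (x + 1)) i) ∧ S (nb (f (x + 1)) j))

/-- What is known about the colors reachable at the end `b` of a run. -/
inductive RunEnd (r0 r1 : ℤ → Prop) (f : ℤ → Fin 35) (S : Fin 35 → Prop) (b : ℤ) : Prop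
  | R (i j : Fin 4) (hij : i ≠ j) (h0 : r0 (b + 1)) (hi : S (nb (f (b + 1)) i))
      (hj : S (nb (f (b + 1)) j))
  | L (m : Fin 4) (h0 : r0 b) (n1 : ¬ r0 (b + 1)) (h : ∀ i, i ≠ m → S (nb (f b) i))
  | P (h1 : r1 (b - 1)) (h0 : r0 (b - 1)) (n0 : ¬ r0 b) (n1 : ¬ r0 (b + 1))
      (h : ∀ c, 2 ≤ isz (f (b - 1)) c → S c)
  | U (e : Fin 35) (h : ∀ c, isz e c = 1 → S c)

variable {r0 r1 r2 : ℤ → Prop} {f : ℤ → Fin 35}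

lemma run_full {a : ℤ} {T : Fin 35 → Prop} (h : ∀ c, (r0 a → isz (f a) c = 0) → T c) :
    Run r0 r1 r2 f T a := by
  by_cases h0 : r0 a
  · exact .A 0 h0 (fun i _ => h _ fun _ => isz_nb _ _) (fun _ i => h _ fun _ => isz_nb _ _)
  · refine .V h0 (fun q => ?_) (fun _ => ⟨0, 1, by decide, h _ (absurd · h0), h _ (absurd · h0)⟩)
    obtain ⟨e, he, -⟩ := avoidV q q
    exact ⟨e, he, fun c _ => h c (absurd · h0)⟩

lemma run_avoid {a : ℤ} {T : Fin 35 → Prop} (s : Fin 35) (h0 : ¬ r0 a) (h : ∀ c, s ≠ c → T c) :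
    Run r0 r1 r2 f T a := by
  refine .V h0 (fun q => ?_) (fun _ => ?_)
  · obtain ⟨e, he, hs⟩ := avoidV s q
    exact ⟨e, he, fun c hc => h c (by rintro rfl; exact hs hc)⟩
  · obtain ⟨i, j, hij, hi, hj⟩ := avoidR s (f (a + 1))
    exact ⟨i, j, hij, h _ hi.symm, h _ hj.symm⟩

lemma run_step {x y : ℤ} (hy : x + 1 = y) {S T : Fin 35 → Prop} (h1x : r1 x) (h1y : r1 y)
    (T01b : r0 y → r1 x → r1 y → False) (T12a : r1 x → r1 y → r2 x → False)
    (hT : ∀ u c, S u → isz u c = 0 → T c) (hS : Run r0 r1 r2 f S x) : Run r0 r1 r2 f T y := by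
  have n0 : ¬ r0 y := fun h => T01b h h1x h1y
  have n2 : ¬ r2 x := fun h => T12a h1x h1y h
  obtain rfl : y = x + 1 := hy.symm
  have e1 : x + 1 - 1 = x := by ring
  have e2 : x + 1 - 2 = x - 1 := by ring
  have e3 : x + 1 - 3 = x - 2 := by ring
  cases hS with
  | A m h0 h h' =>
    refine .A2 (by rwa [e1]) (by rwa [e1]) n0 ?_
    rw [e1]
    intro c hc
    obtain ⟨i, hi⟩ := run2 _ _ hc
    exact hT _ _ (h' n2 i) hi
  | A2 h1 h0 n0' h =>
    refine .A3 (by rwa [e2]) (by rwa [e1]) n0 ?_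
    rw [e2]
    intro c hc
    obtain ⟨u, hu, hu'⟩ := run3 _ _ hc
    exact hT _ _ (h u hu) hu'
  | A3 h0 n1 n0' h =>
    refine .A4 (by rwa [e3]) (by rwa [e2]) (by rwa [e1]) n0 ?_
    rw [e3]
    intro c hc
    obtain ⟨u, hu, hu'⟩ := run4 _ _ hc
    exact hT _ _ (h u hu) hu'
  | A4 h0 n2 n1 n0' h =>
    refine run_avoid (f (x - 3)) n0 ?_
    intro c hc
    obtain ⟨u, hu, hu'⟩ := run5 _ _ hc
    exact hT _ _ (h u hu) hu'
  | V n0' h h' =>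
    refine .V n0 ?_ ?_
    · intro q
      obtain ⟨e, he, hS⟩ := h q
      refine ⟨e, he, fun c hc => ?_⟩
      obtain ⟨u, hu, hu'⟩ := runV _ _ hc
      exact hT _ _ (hS u hu) hu'
    · intro _
      obtain ⟨e, he, hS⟩ := h (f (x + 1 + 1))
      obtain ⟨i, j, hij, ⟨u, hu, hu'⟩, ⟨v, hv, hv'⟩⟩ := runVR _ _ he
      exact ⟨i, j, hij, hT _ _ (hS u hu) hu', hT _ _ (hS v hv) hv'⟩

lemma run_end {b : ℤ} {S S' : Fin 35 → Prop} (h1b : r1 b)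
    (hI : RowOK r0 r1 f (fun _ => True))
    (T01a : r0 b → r0 (b + 1) → r1 b → False)
    (hS' : ∀ c, S c → (r0 (b + 1) → isz (f (b + 1)) c = 0) → S' c)
    (hS : Run r0 r1 r2 f S b) : RunEnd r0 r1 f S' b := by
  cases hS with
  | A m h0 h h' =>
    have n1 : ¬ r0 (b + 1) := fun hh => T01a h0 hh h1b
    exact .L m h0 n1 fun i hi => hS' _ (h i hi) (absurd · n1)
  | A2 h1 h0 n0 h =>
    by_cases hb : r0 (b + 1)
    · obtain ⟨i, j, hij, hi, hj⟩ := end2 _ _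
        (hI.g1 (b - 1) b (b + 1) (by ring) (by ring) trivial h0 n0 hb)
      exact .R i j hij hb (hS' _ (h _ hi) fun _ => isz_nb _ _)
        (hS' _ (h _ hj) fun _ => isz_nb _ _)
    · exact .P h1 h0 n0 hb fun c hc => hS' _ (h c hc) (absurd · hb)
  | A3 h0 n1 n0 h =>
    by_cases hb : r0 (b + 1)
    · have hh := hI.g2 (b - 2) (b - 1) b (b + 1) (by ring) (by ring) (by ring) trivial h0 n1 n0 hb
      obtain ⟨i, j, hij, hi, hj⟩ := end3 _ _ hh.1 hh.2
      exact .R i j hij hb (hS' _ (h _ hi) fun _ => isz_nb _ _)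
        (hS' _ (h _ hj) fun _ => isz_nb _ _)
    · exact .U (f (b - 2)) fun c hc => hS' _ (h c (by omega)) (absurd · hb)
  | A4 h0 n2 n1 n0 h =>
    by_cases hb : r0 (b + 1)
    · have hh := hI.g3 (b - 3) (b - 2) (b - 1) b (b + 1) (by ring) (by ring) (by ring) (by ring)
        trivial h0 n2 n1 n0 hb
      obtain ⟨i, j, hij, hi, hj⟩ := end4 _ _ hh
      exact .R i j hij hb (hS' _ (h _ hi) fun _ => isz_nb _ _)
        (hS' _ (h _ hj) fun _ => isz_nb _ _)
    · exact .U (f (b - 3)) fun c hc => hS' _ (h c (by omega)) (absurd · hb)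
  | V n0 h h' =>
    by_cases hb : r0 (b + 1)
    · obtain ⟨i, j, hij, hi, hj⟩ := h' hb
      exact .R i j hij hb (hS' _ hi fun _ => isz_nb _ _) (hS' _ hj fun _ => isz_nb _ _)
    · obtain ⟨e, -, he⟩ := h 0
      exact .U e fun c hc => hS' _ (he c hc) (absurd · hb)

lemma al_one {b a : ℤ} {u c : Fin 35} (h : isz u c = 1) : Al r2 b a u c :=
  ⟨fun _ => by omega, fun _ _ _ => by omega, fun _ => by omega, fun _ => by omega⟩
lemma al_two {b a : ℤ} {u c : Fin 35} (ha : a = b + 2) (h : isz u c ≤ 1)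
    (h' : r2 (b - 1) → r2 a → 1 ≤ isz u c) : Al r2 b a u c :=
  ⟨fun _ => h, fun _ => h', fun _ => by omega, fun _ => by omega⟩
lemma al_three {b a : ℤ} {u c : Fin 35} (ha : a = b + 3) (h : 1 ≤ isz u c) (h' : isz u c ≤ 2) :
    Al r2 b a u c :=
  ⟨fun _ => by omega, fun _ => by omega, fun _ => ⟨h, h'⟩, fun _ => by omega⟩
lemma al_four {b a : ℤ} {u c : Fin 35} (ha : b + 4 ≤ a) (h : u ≠ c) : Al r2 b a u c :=
  ⟨fun _ => by omega, fun _ => by omega, fun _ => by omega, fun _ hh => h (eq_of_isz _ _ hh)⟩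

lemma two_v {b a : ℤ} {S T : Fin 35 → Prop} {u v : Fin 35} (n0 : ¬ r0 a) (huv : u ≠ v)
    (hu : S u) (hv : S v)
    (hT : ∀ u c, S u → Al r2 b a u c → (r0 a → isz (f a) c = 0) → T c) (q : Fin 35) :
    ∃ e, e ≠ q ∧ ∀ c, isz e c = 1 → T c := by
  by_cases h : u = q
  · exact ⟨v, fun h' => huv (h.trans h'.symm),
      fun c hc => hT _ _ hv (al_one hc) (absurd · n0)⟩
  · exact ⟨u, h, fun c hc => hT _ _ hu (al_one hc) (absurd · n0)⟩

lemma two_full {b a : ℤ} {S T : Fin 35 → Prop} {u v : Fin 35} (hab : b + 4 ≤ a) (huv : u ≠ v)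
    (hu : S u) (hv : S v)
    (hT : ∀ u c, S u → Al r2 b a u c → (r0 a → isz (f a) c = 0) → T c) :
    Run r0 r1 r2 f T a := by
  refine run_full fun c hc => ?_
  by_cases h : u = c
  · exact hT _ _ hv (al_four hab fun h' => huv (h.trans h'.symm)) hc
  · exact hT _ _ hu (al_four hab h) hc

lemma jump_R {b a : ℤ} {S T : Fin 35 → Prop} (hab : b + 1 < a) (h1b : r1 b) (h1a : r1 a)
    (hI : RowOK r0 r1 f (fun _ => True))
    (hT : ∀ u c, S u → Al r2 b a u c → (r0 a → isz (f a) c = 0) → T c)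
    (i j : Fin 4) (hij : i ≠ j) (h0 : r0 (b + 1)) (hi : S (nb (f (b + 1)) i))
    (hj : S (nb (f (b + 1)) j)) : Run r0 r1 r2 f T a := by
  have hne := nb_inj (f (b + 1)) i j hij
  rcases (by omega : a = b + 2 ∨ a = b + 3 ∨ b + 4 ≤ a) with ha | ha | ha
  · by_cases ha0 : r0 a
    · have had := hI.adj (b + 1) a (by omega) trivial h0 ha0
      by_cases hfl : r2 (b - 1) ∧ r2 a
      · obtain ⟨m, hm⟩ := trRA2f _ _ had i j hij
        refine .A m ha0 (fun k hk => ?_) (fun h => absurd hfl.2 h)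
        rcases hm k hk with h | h
        · exact hT _ _ hi (al_one h) fun _ => isz_nb _ _
        · exact hT _ _ hj (al_one h) fun _ => isz_nb _ _
      · have hall : ∀ k, T (nb (f a) k) := fun k =>
          hT _ _ hi (al_two ha (trRA2 _ _ had i k) fun x y => absurd ⟨x, y⟩ hfl)
            fun _ => isz_nb _ _
        exact .A 0 ha0 (fun k _ => hall k) (fun _ => hall)
    · refine .V ha0 (two_v ha0 hne hi hj hT) fun hn => ?_
      have hg := hI.g1 (b + 1) a (a + 1) (by omega) (by omega) trivial h0 ha0 hn
      obtain ⟨k, l, hkl, hk, hl⟩ := trRV2 _ _ hg i j hij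
      refine ⟨k, l, hkl, ?_, ?_⟩
      · rcases hk with h | h
        · exact hT _ _ hi (al_one h) (absurd · ha0)
        · exact hT _ _ hj (al_one h) (absurd · ha0)
      · rcases hl with h | h
        · exact hT _ _ hi (al_one h) (absurd · ha0)
        · exact hT _ _ hj (al_one h) (absurd · ha0)
  · by_cases ha0 : r0 a
    · have hg : 1 ≤ isz (f (b + 1)) (f a) := by
        by_cases hm : r0 (b + 2)
        · have e1 := hI.adj (b + 1) (b + 2) (by omega) trivial h0 hm
          have e2 := hI.adj (b + 2) a (by omega) trivial hm ha0
          exact comp01 _ _ _ e1 (by omega)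
        · exact hI.g1f b (b + 1) (b + 2) a (by omega) (by omega) (by omega) trivial h0 hm ha0
            h1b h1a
      have hall : ∀ k, T (nb (f a) k) := by
        intro k
        rcases trRA3 _ _ hg i j hij k with h | h
        · exact hT _ _ hi (al_three ha h.1 h.2) fun _ => isz_nb _ _
        · exact hT _ _ hj (al_three ha h.1 h.2) fun _ => isz_nb _ _
      exact .A 0 ha0 (fun k _ => hall k) (fun _ => hall)
    · refine .V ha0 (two_v ha0 hne hi hj hT) fun hn => ?_
      have hg : 1 ≤ isz (f (b + 1)) (f (a + 1)) := by
        by_cases hm : r0 (b + 2)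
        · have e1 := hI.adj (b + 1) (b + 2) (by omega) trivial h0 hm
          have e2 := hI.g1 (b + 2) a (a + 1) (by omega) (by omega) trivial hm ha0 hn
          exact comp01 _ _ _ e1 e2
        · exact (hI.g2 (b + 1) (b + 2) a (a + 1) (by omega) (by omega) (by omega) trivial h0 hm
            ha0 hn).1
      have hall : ∀ k, T (nb (f (a + 1)) k) := by
        intro k
        rcases trRA3 _ _ hg i j hij k with h | h
        · exact hT _ _ hi (al_three ha h.1 h.2) (absurd · ha0)
        · exact hT _ _ hj (al_three ha h.1 h.2) (absurd · ha0)
      exact ⟨0, 1, by decide, hall 0, hall 1⟩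
  · exact two_full ha hne hi hj hT

lemma jump_L {b a : ℤ} {S T : Fin 35 → Prop} (hab : b + 1 < a)
    (hI : RowOK r0 r1 f (fun _ => True))
    (hT : ∀ u c, S u → Al r2 b a u c → (r0 a → isz (f a) c = 0) → T c)
    (m : Fin 4) (h0 : r0 b) (n1 : ¬ r0 (b + 1)) (h : ∀ i, i ≠ m → S (nb (f b) i)) :
    Run r0 r1 r2 f T a := by
  obtain ⟨i, j, hij, him, hjm⟩ : ∃ i j : Fin 4, i ≠ j ∧ i ≠ m ∧ j ≠ m := by
    clear h; revert m; decide
  have hi := h i him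
  have hj := h j hjm
  have hne := nb_inj (f b) i j hij
  rcases (by omega : a = b + 2 ∨ a = b + 3 ∨ b + 4 ≤ a) with ha | ha | ha
  · by_cases ha0 : r0 a
    · have had := hI.g1 b (b + 1) a (by omega) (by omega) trivial h0 n1 ha0
      by_cases hfl : r2 (b - 1) ∧ r2 a
      · obtain ⟨n, hn⟩ := trLA2f _ _ had m
        refine .A n ha0 (fun k hk => ?_) (fun h => absurd hfl.2 h)
        obtain ⟨l, hl, h'⟩ := hn k hk
        exact hT _ _ (h l hl) (al_one h') fun _ => isz_nb _ _
      · have hall : ∀ k, T (nb (f a) k) := fun k => by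
          obtain ⟨l, hl, h'⟩ := trLA2 _ _ had m k
          exact hT _ _ (h l hl) (al_two ha h' fun x y => absurd ⟨x, y⟩ hfl) fun _ => isz_nb _ _
        exact .A 0 ha0 (fun k _ => hall k) (fun _ => hall)
    · refine .V ha0 (two_v ha0 hne hi hj hT) fun hn => ?_
      have hg := hI.g2 b (b + 1) a (a + 1) (by omega) (by omega) (by omega) trivial h0 n1 ha0 hn
      obtain ⟨k, l, hkl, ⟨i', hi', hk⟩, ⟨j', hj', hl⟩⟩ := trLV2 _ _ hg.1 hg.2 m
      exact ⟨k, l, hkl, hT _ _ (h i' hi') (al_one hk) (absurd · ha0),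
        hT _ _ (h j' hj') (al_one hl) (absurd · ha0)⟩
  · by_cases ha0 : r0 a
    · have hg : 1 ≤ isz (f b) (f a) := by
        by_cases hm : r0 (b + 2)
        · have e1 := hI.g1 b (b + 1) (b + 2) (by omega) (by omega) trivial h0 n1 hm
          have e2 := hI.adj (b + 2) a (by omega) trivial hm ha0
          rw [isz_comm] at e1 e2 ⊢
          exact comp01 _ _ _ e2 e1
        · exact (hI.g2 b (b + 1) (b + 2) a (by omega) (by omega) (by omega) trivial h0 n1 hm
            ha0).1
      have hall : ∀ k, T (nb (f a) k) := by
        intro k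
        obtain ⟨l, hl, h'⟩ := trLA3 _ _ hg m k
        exact hT _ _ (h l hl) (al_three ha h'.1 h'.2) fun _ => isz_nb _ _
      exact .A 0 ha0 (fun k _ => hall k) (fun _ => hall)
    · refine .V ha0 (two_v ha0 hne hi hj hT) fun hn => ?_
      obtain ⟨k, l, hkl, ⟨i', hi', hk⟩, ⟨j', hj', hl⟩⟩ := trLV3 (f b) (f (a + 1)) m
      exact ⟨k, l, hkl, hT _ _ (h i' hi') (al_three ha hk.1 hk.2) (absurd · ha0),
        hT _ _ (h j' hj') (al_three ha hl.1 hl.2) (absurd · ha0)⟩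
  · exact two_full ha hne hi hj hT

lemma jump_P {b a : ℤ} {S T : Fin 35 → Prop} (hab : b + 1 < a) (h1b : r1 b)
    (hI : RowOK r0 r1 f (fun _ => True))
    (T12a : r1 (b - 1) → r1 b → r2 (b - 1) → False)
    (hT : ∀ u c, S u → Al r2 b a u c → (r0 a → isz (f a) c = 0) → T c)
    (h1 : r1 (b - 1)) (h0 : r0 (b - 1)) (n0 : ¬ r0 b) (n1 : ¬ r0 (b + 1))
    (h : ∀ c, 2 ≤ isz (f (b - 1)) c → S c) : Run r0 r1 r2 f T a := by
  rcases (by omega : a = b + 2 ∨ a = b + 3 ∨ b + 4 ≤ a) with ha | ha | ha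
  · have key : ∀ c, f (b - 1) ≠ c → (r0 a → isz (f a) c = 0) → T c := by
      intro c hc h'
      obtain ⟨u, hu, hu'⟩ := ball2 _ _ hc
      exact hT _ _ (h u hu) (al_two ha hu' fun x _ => (T12a h1 h1b x).elim) h'
    by_cases ha0 : r0 a
    · have hg := hI.g2 (b - 1) b (b + 1) a (by omega) (by omega) (by omega) trivial h0 n0 n1 ha0
      have hall : ∀ k, T (nb (f a) k) := by
        intro k
        refine key _ (fun he => ?_) fun _ => isz_nb _ _
        have := isz_nb (f a) k
        rw [← he, isz_comm] at this
        omega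
      exact .A 0 ha0 (fun k _ => hall k) (fun _ => hall)
    · exact run_avoid _ ha0 fun c hc => key c hc (absurd · ha0)
  · refine run_full fun c hc => ?_
    obtain ⟨u, hu, h3, h4⟩ := ball3 (f (b - 1)) c
    exact hT _ _ (h u hu) (al_three ha h3 h4) hc
  · obtain ⟨u, v, huv, hu, hv⟩ := two_ball (f (b - 1))
    exact two_full ha huv (h u hu) (h v hv) hT

lemma run_jump {b a : ℤ} {S T : Fin 35 → Prop} (hab : b + 1 < a) (h1b : r1 b) (h1a : r1 a)
    (hI : RowOK r0 r1 f (fun _ => True))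
    (T12a : r1 (b - 1) → r1 b → r2 (b - 1) → False)
    (hT : ∀ u c, S u → Al r2 b a u c → (r0 a → isz (f a) c = 0) → T c)
    (hS : RunEnd r0 r1 f S b) : Run r0 r1 r2 f T a := by
  cases hS with
  | R i j hij h0 hi hj => exact jump_R hab h1b h1a hI hT i j hij h0 hi hj
  | L m h0 n1 h => exact jump_L hab hI hT m h0 n1 h
  | P h1 h0 n0 n1 h => exact jump_P hab h1b hI T12a hT h1 h0 n0 n1 h
  | U e h =>
    refine run_full fun c hc => ?_
    obtain ⟨u, hu, hu'⟩ := comp11 e c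
    exact hT _ _ (h u hu) (al_one hu') hc

lemma runEnd_nonempty {b : ℤ} {S : Fin 35 → Prop} (hS : RunEnd r0 r1 f S b) : ∃ c, S c := by
  cases hS with
  | R i j hij h0 hi hj => exact ⟨_, hi⟩
  | L m h0 n1 h =>
    obtain ⟨i, hi⟩ : ∃ i : Fin 4, i ≠ m := by
      clear h; revert m; decide
    exact ⟨_, h i hi⟩
  | P h1 h0 n0 n1 h => exact ⟨_, h (f (b - 1)) (by rw [isz_self]; omega)⟩
  | U e h =>
    obtain ⟨u, -, -, hu, -⟩ := two_one e
    exact ⟨u, h u hu⟩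

/-- The row extension lemma. -/
lemma row_extend (lo hi : ℤ) (hlo : ∀ x, r1 x → lo ≤ x) (hhi : ∀ x, r1 x → x ≤ hi)
    (T01a : ∀ x, r0 x → r0 (x + 1) → r1 x → False)
    (T01b : ∀ x, r0 (x + 1) → r1 x → r1 (x + 1) → False)
    (T12a : ∀ x, r1 x → r1 (x + 1) → r2 x → False)
    (hI : RowOK r0 r1 f (fun _ => True)) :
    ∃ g, RowOK r1 r2 g (fun _ => True) ∧ ∀ x, r1 x →
      (r0 x → isz (f x) (g x) = 0) ∧ (r0 (x + 1) → isz (f (x + 1)) (g x) = 0) := by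
  classical
  have hrunend : ∀ b, r1 b → ¬ r1 (b + 1) →
      Run r0 r1 r2 f (fun c => ∃ g, PG r0 r1 r2 f g b ∧ g b = c) b →
      RunEnd r0 r1 f (fun c => ∃ g, PG r0 r1 r2 f g (b + 1) ∧ g b = c) b := by
    intro b hb hb' hr
    refine run_end hb hI (T01a b) ?_ hr
    rintro c ⟨g, hg, rfl⟩ h
    exact ⟨g, pg_end rfl hg hb' h, rfl⟩
  have hrun : ∀ n : ℕ, ∀ x, x < lo + n → r1 x →
      Run r0 r1 r2 f (fun c => ∃ g, PG r0 r1 r2 f g x ∧ g x = c) x := by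
    intro n
    induction n with
    | zero =>
      intro x hx h1
      have := hlo x h1
      simp at hx
      omega
    | succ n ih =>
      intro x hx h1
      push_cast at hx
      by_cases hex : ∃ z, z < x ∧ r1 z
      · obtain ⟨b, ⟨hbx, hb⟩, hmax⟩ := Int.exists_greatest_of_bdd
          (P := fun z => z < x ∧ r1 z) ⟨x, fun z hz => hz.1.le⟩ hex
        have hrb := ih b (by omega) hb
        by_cases hadj : b + 1 = x
        · refine run_step hadj hb h1 ?_ ?_ ?_ hrb
          · subst hadj; exact T01b b
          · subst hadj; exact T12a b
          · rintro u c ⟨g, hg, rfl⟩ hc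
            refine ⟨_, pg_run c hadj hg hb ?_ hc, ?_⟩
            · subst hadj; exact fun h => T01b b h hb h1
            · simp [show ¬ x ≤ b by omega]
        · have hno : ∀ z, b < z → z < x → ¬ r1 z := by
            intro z hz hzx h
            have := hmax z ⟨hzx, h⟩
            omega
          have he := hrunend b hb (hno _ (by omega) (by omega)) hrb
          refine run_jump (b := b) (by omega) hb h1 hI ?_ ?_ he
          · intro h h' h''
            exact T12a (b - 1) h (by simpa using h') h''
          · rintro u c ⟨g, hg, rfl⟩ hal hc
            exact ⟨_, pg_jump c (by omega) hg hb h1 hno hc hal, by simp⟩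
      · refine run_full fun c hc => ⟨_, pg_first c ?_ hc, rfl⟩
        intro z hz h
        exact hex ⟨z, hz, h⟩
  by_cases hne : ∃ z, r1 z
  · obtain ⟨b, hb, hmax⟩ := Int.exists_greatest_of_bdd (P := r1) ⟨hi, hhi⟩ hne
    have hb' : ¬ r1 (b + 1) := fun h => by
      have := hmax _ h
      omega
    have hlb := hlo b hb
    obtain ⟨c, g, hg, -⟩ := runEnd_nonempty
      (hrunend b hb hb' (hrun (b - lo + 1).toNat b (by omega) hb))
    refine ⟨g, ⟨?_, ?_, ?_, ?_, ?_⟩, ?_⟩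
    · intro z w h1 _ hz hw
      exact hg.row.adj z w h1 (by have := hmax w hw; omega) hz hw
    · intro z v w h1 h2 _ hz hv hw
      exact hg.row.g1 z v w h1 h2 (by have := hmax w hw; omega) hz hv hw
    · intro t z v w h0 h1 h2 _ hz hv hw
      exact hg.row.g1f t z v w h0 h1 h2 (by have := hmax w hw; omega) hz hv hw
    · intro z v v' w h1 h2 h3 _ hz hv hv' hw
      exact hg.row.g2 z v v' w h1 h2 h3 (by have := hmax w hw; omega) hz hv hv' hw
    · intro z v v' v'' w h1 h2 h3 h4 _ hz hv hv' hv'' hw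
      exact hg.row.g3 z v v' v'' w h1 h2 h3 h4 (by have := hmax w hw; omega) hz hv hv' hv'' hw
    · intro x hx
      have := hmax x hx
      exact ⟨hg.hL x (by omega) hx, hg.hR x (x + 1) rfl (by omega) hx⟩
  · have hno : ∀ z, ¬ r1 z := fun z hz => hne ⟨z, hz⟩
    refine ⟨fun _ => 0, ⟨?_, ?_, ?_, ?_, ?_⟩, ?_⟩
    · intro z w h1 _ hz; exact absurd hz (hno z)
    · intro z v w h1 h2 _ hz; exact absurd hz (hno z)
    · intro t z v w h0 h1 h2 _ hz; exact absurd hz (hno z)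
    · intro z v v' w h1 h2 h3 _ hz; exact absurd hz (hno z)
    · intro z v v' v'' w h1 h2 h3 h4 _ hz; exact absurd hz (hno z)
    · intro x hx; exact absurd hx (hno x)

end Rows

/-! From rows to the lattice -/

lemma finite_coloring (Q : Set (ℤ × ℤ)) (hQ : Q.Finite)
    (hA : ∀ x y : ℤ, (x, y) ∈ Q → (x + 1, y) ∈ Q → (x, y + 1) ∈ Q → False)
    (hB : ∀ x y : ℤ, (x + 1, y) ∈ Q → (x, y + 1) ∈ Q → (x + 1, y + 1) ∈ Q → False) :
    ∃ c : ℤ × ℤ → Fin 35,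
      (∀ x y : ℤ, (x, y) ∈ Q → (x + 1, y) ∈ Q → isz (c (x, y)) (c (x + 1, y)) = 0) ∧
      (∀ x y : ℤ, (x, y) ∈ Q → (x, y + 1) ∈ Q → isz (c (x, y)) (c (x, y + 1)) = 0) ∧
      (∀ x y : ℤ, (x + 1, y) ∈ Q → (x, y + 1) ∈ Q →
        isz (c (x + 1, y)) (c (x, y + 1)) = 0) := by
  classical
  obtain ⟨M, hM⟩ : ∃ M : ℤ, ∀ p ∈ Q, -M ≤ p.1 ∧ p.1 ≤ M ∧ -M ≤ p.2 ∧ p.2 ≤ M := by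
    have h1 := (hQ.image (fun p : ℤ × ℤ => |p.1|)).bddAbove
    have h2 := (hQ.image (fun p : ℤ × ℤ => |p.2|)).bddAbove
    obtain ⟨A, hA⟩ := h1
    obtain ⟨B, hB⟩ := h2
    refine ⟨max A B, fun p hp => ?_⟩
    have a1 := abs_le.1 ((hA ⟨p, hp, rfl⟩).trans (le_max_left A B))
    have a2 := abs_le.1 ((hB ⟨p, hp, rfl⟩).trans (le_max_right A B))
    exact ⟨a1.1, a1.2, a2.1, a2.2⟩
  let r : ℤ → ℤ → Prop := fun y x => (x, y) ∈ Q
  let Y : ℕ → ℤ := fun n => (n : ℤ) - M - 1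
  have hY : ∀ n, Y (n + 1) = Y n + 1 := fun n => by simp only [Y]; push_cast; ring
  have step : ∀ (n : ℕ) (f : ℤ → Fin 35), RowOK (r (Y n)) (r (Y n + 1)) f (fun _ => True) →
      ∃ g, RowOK (r (Y (n + 1))) (r (Y (n + 1) + 1)) g (fun _ => True) ∧
        ∀ x, r (Y (n + 1)) x → (r (Y n) x → isz (f x) (g x) = 0) ∧
          (r (Y n) (x + 1) → isz (f (x + 1)) (g x) = 0) := by
    intro n f hf
    rw [hY]
    exact row_extend (-M) M (fun x hx => (hM _ hx).1) (fun x hx => (hM _ hx).2.1)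
      (fun x => hA x (Y n)) (fun x => hB x (Y n)) (fun x => hA x (Y n + 1)) hf
  have base : RowOK (r (Y 0)) (r (Y 0 + 1)) (fun _ => 0) (fun _ => True) := by
    have hno : ∀ z, ¬ r (Y 0) z := fun z hz => by
      have := (hM _ hz).2.2.1
      simp [Y] at this
    refine ⟨?_, ?_, ?_, ?_, ?_⟩
    · intro z w h1 _ hz; exact absurd hz (hno z)
    · intro z v w h1 h2 _ hz; exact absurd hz (hno z)
    · intro t z v w h0 h1 h2 _ hz; exact absurd hz (hno z)
    · intro z v v' w h1 h2 h3 _ hz; exact absurd hz (hno z)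
    · intro z v v' v'' w h1 h2 h3 h4 _ hz; exact absurd hz (hno z)
  choose G hG1 hG2 using step
  let F : (n : ℕ) → {f : ℤ → Fin 35 // RowOK (r (Y n)) (r (Y n + 1)) f (fun _ => True)} :=
    fun n => Nat.rec ⟨fun _ => 0, base⟩ (fun n p => ⟨G n p.1 p.2, hG1 n p.1 p.2⟩) n
  have hF : ∀ n x, r (Y (n + 1)) x → (r (Y n) x → isz ((F n).1 x) ((F (n + 1)).1 x) = 0) ∧
      (r (Y n) (x + 1) → isz ((F n).1 (x + 1)) ((F (n + 1)).1 x) = 0) :=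
    fun n => hG2 n (F n).1 (F n).2
  have hrow : ∀ p ∈ Q, ∃ n, Y n = p.2 ∧ (p.2 + M + 1).toNat = n ∧
      (p.2 + 1 + M + 1).toNat = n + 1 := by
    intro p hp
    have := (hM p hp).2.2.1
    refine ⟨(p.2 + M + 1).toNat, ?_, rfl, ?_⟩
    · simp only [Y]; omega
    · omega
  refine ⟨fun p => (F (p.2 + M + 1).toNat).1 p.1, ?_, ?_, ?_⟩
  · intro x y h1 h2
    obtain ⟨n, hn, e1, -⟩ := hrow _ h1
    simp only at hn e1 ⊢
    rw [e1]
    exact (F n).2.adj x (x + 1) rfl trivial (by rw [hn]; exact h1) (by rw [hn]; exact h2)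
  · intro x y h1 h2
    obtain ⟨n, hn, e1, e2⟩ := hrow _ h1
    simp only at hn e1 e2 ⊢
    rw [e1, e2]
    exact (hF n x (by rw [hY, hn]; exact h2)).1 (by rw [hn]; exact h1)
  · intro x y h1 h2
    obtain ⟨n, hn, e1, e2⟩ := hrow _ h1
    simp only at hn e1 e2 ⊢
    rw [e1, e2]
    exact (hF n x (by rw [hY, hn]; exact h2)).2 (by rw [hn]; exact h1)

lemma triLattice_adj (p q : ℤ × ℤ) : triLattice.Adj p q ↔
    q = (p.1 + 1, p.2) ∨ p = (q.1 + 1, q.2) ∨ q = (p.1, p.2 + 1) ∨ p = (q.1, q.2 + 1) ∨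
    (∃ x y, p = (x + 1, y) ∧ q = (x, y + 1)) ∨ (∃ x y, q = (x + 1, y) ∧ p = (x, y + 1)) := by
  obtain ⟨a, b⟩ := p
  obtain ⟨c, d⟩ := q
  simp only [triLattice, SimpleGraph.fromRel_adj, Set.mem_insert_iff, Set.mem_singleton_iff,
    Prod.mk_sub_mk, Prod.mk.injEq, ne_eq]
  constructor
  · rintro ⟨-, h⟩
    by_cases h5 : a = c + 1 ∧ d = b + 1
    · exact .inr <| .inr <| .inr <| .inr <| .inl ⟨c, b, by omega, by omega⟩
    · by_cases h6 : c = a + 1 ∧ b = d + 1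
      · exact .inr <| .inr <| .inr <| .inr <| .inr ⟨a, d, by omega, by omega⟩
      · omega
  · rintro (h | h | h | h | ⟨x, y, h, h'⟩ | ⟨x, y, h, h'⟩) <;> omega

/-- The Kneser graph of triples in a seven-element set. -/
def kneser73 : SimpleGraph (Fin 35) where
  Adj c d := isz c d = 0
  symm := ⟨fun c d h => by rw [isz_comm]; exact h⟩
  loopless := ⟨fun c h => by rw [isz_self] at h; omega⟩

/-- The triple named by a color. -/
def triple (c : Fin 35) : Finset ℕ := (Finset.Icc 1 7).filter (fun i => (msk c).testBit (i - 1))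

lemma triple_card : ∀ c, (triple c).card = 3 := by decide +kernel
lemma triple_disj : ∀ c d, isz c d = 0 → Disjoint (triple c) (triple d) := by decide +kernel

theorem triangleFree_subgraph_of_triLattice_73_colorable (R : Set (ℤ × ℤ))
    (htf : (triLattice.induce R).CliqueFree 3) :
    ∃ c : R → Finset ℕ, (∀ v, c v ⊆ Finset.Icc 1 7 ∧ (c v).card = 3) ∧
      ∀ u v, (triLattice.induce R).Adj u v → Disjoint (c u) (c v) := by
  classical
  have tri : ∀ p q s : ℤ × ℤ, p ∈ R → q ∈ R → s ∈ R → triLattice.Adj p q → triLattice.Adj p s →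
      triLattice.Adj q s → False := by
    intro p q s hp hq hs h1 h2 h3
    refine htf {⟨p, hp⟩, ⟨q, hq⟩, ⟨s, hs⟩} ?_
    rw [SimpleGraph.is3Clique_triple_iff]
    exact ⟨h1, h2, h3⟩
  have hA : ∀ x y : ℤ, (x, y) ∈ R → (x + 1, y) ∈ R → (x, y + 1) ∈ R → False := by
    intro x y h1 h2 h3
    refine tri _ _ _ h1 h2 h3 ?_ ?_ ?_ <;> rw [triLattice_adj]
    · simp
    · simp
    · exact .inr <| .inr <| .inr <| .inr <| .inl ⟨x, y, rfl, rfl⟩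
  have hB : ∀ x y : ℤ, (x + 1, y) ∈ R → (x, y + 1) ∈ R → (x + 1, y + 1) ∈ R → False := by
    intro x y h1 h2 h3
    refine tri _ _ _ h1 h2 h3 ?_ ?_ ?_ <;> rw [triLattice_adj]
    · exact .inr <| .inr <| .inr <| .inr <| .inl ⟨x, y, rfl, rfl⟩
    · simp
    · simp
  have hom : Nonempty ((triLattice.induce R) →g kneser73) := by
    refine SimpleGraph.nonempty_hom_of_forall_finite_subgraph_hom fun G' hfin => ?_
    have hsub : ∀ p ∈ (Subtype.val '' G'.verts : Set (ℤ × ℤ)), p ∈ R := by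
      rintro _ ⟨v, -, rfl⟩
      exact v.2
    have hex := finite_coloring (Subtype.val '' G'.verts) (hfin.image _)
      (fun x y h1 h2 h3 => hA x y (hsub _ h1) (hsub _ h2) (hsub _ h3))
      (fun x y h1 h2 h3 => hB x y (hsub _ h1) (hsub _ h2) (hsub _ h3))
    refine ⟨fun v => hex.choose v.1.1, ?_⟩
    obtain ⟨c1, c2, c3⟩ := hex.choose_spec
    generalize hex.choose = c at c1 c2 c3
    rintro ⟨⟨p, hpR⟩, hp⟩ ⟨⟨q, hqR⟩, hq⟩ hadj
    have hpq : triLattice.Adj p q := G'.adj_sub hadj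
    have mp : p ∈ (Subtype.val '' G'.verts : Set (ℤ × ℤ)) := ⟨_, hp, rfl⟩
    have mq : q ∈ (Subtype.val '' G'.verts : Set (ℤ × ℤ)) := ⟨_, hq, rfl⟩
    change isz (c p) (c q) = 0
    clear hadj hp hq
    rw [triLattice_adj] at hpq
    rcases hpq with rfl | rfl | rfl | rfl | ⟨x, y, rfl, rfl⟩ | ⟨x, y, rfl, rfl⟩
    · exact c1 _ _ mp mq
    · rw [isz_comm]; exact c1 _ _ mq mp
    · exact c2 _ _ mp mq
    · rw [isz_comm]; exact c2 _ _ mq mp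
    · exact c3 _ _ mp mq
    · rw [isz_comm]; exact c3 _ _ mq mp
  obtain ⟨φ⟩ := hom
  refine ⟨fun v => triple (φ v), fun v => ⟨Finset.filter_subset _ _, triple_card _⟩, ?_⟩
  intro u v h
  exact triple_disj _ _ (φ.map_adj h)
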